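/- Let K be a (commutative) field and n a positive integer. If V is a K-linear subspace of M_n(K) all of whose elements are nilpotent matrices and dim_K V = (n choose 2), then there exists an invertible matrix P in M_n(K) such that P V P^{-1} equals the set NT_n(K) of all strictly upper-triangular n×n matrices over K. -/

import Mathlib

/-!
Nilpotency of `A`, `B` and `A + B` forces `tr (A B) = 0` and `tr (A² B) + tr (A B²) = 0`, also in
characteristic two. A rank one element `x ⊗ f` of a nilpotent space `V` forces `f` to vanish on
`K x + V x`; passing to `E / K x`, this bounds `dim V` by `n choose 2`, and in the equality case
every such `x ⊗ f` lies in `V` and the bound is attained on every `E / K x`.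

So it suffices to find a nonzero `u` killed by `V`, and one takes `u ≠ 0` with `V u` of minimal
dimension. If `V u` is a line, it is itself killed by `V`. If `dim V u ≥ 2`, then by induction the
space induced on `E / K u` is strictly upper triangular in some basis, whose first two vectors lift
to `e` and `b`. Lifting rank one maps with image `e` or `b` to `V` and taking traces of their
anticommutators against `V` shows that a well-chosen `e + c u` contradicts the minimality, except
when `K u + V u` is three-dimensional and invariant under `V`. In that case an alternating form on
a space of dimension three gives the contradiction.
-/

section TraceIdentities

open Polynomial

variable {R ι : Type*} [CommRing R] [IsDomain R] [Fintype ι] [DecidableEq ι] {A B : Matrix ι ι R}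

theorem charpolyRev_eq_one_of_isNilpotent (hA : IsNilpotent A) : A.charpolyRev = 1 := by
  rw [eq_C_of_natDegree_eq_zero
    (natDegree_eq_zero_of_isUnit (A.isUnit_charpolyRev_of_isNilpotent hA)),
    coeff_zero_eq_eval_zero, A.eval_charpolyRev, C_1]

/-- The inverse of `1 - X A` over `R[X]`, which for a nilpotent matrix `A` is the generating
function of its powers. -/
noncomputable def resolventRev (A : Matrix ι ι R) : Matrix ι ι R[X] :=
  (1 - (X : R[X]) • A.map C)⁻¹

theorem resolventRev_mul (hA : IsNilpotent A) :
    resolventRev A * (1 - (X : R[X]) • A.map C) = 1 :=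
  Matrix.nonsing_inv_mul _ <| by
    rw [← Matrix.charpolyRev, charpolyRev_eq_one_of_isNilpotent hA]
    exact isUnit_one

theorem mul_resolventRev (hA : IsNilpotent A) :
    (1 - (X : R[X]) • A.map C) * resolventRev A = 1 :=
  mul_eq_one_comm.1 (resolventRev_mul hA)

theorem det_resolventRev (hA : IsNilpotent A) : (resolventRev A).det = 1 := by
  have h := congr_arg Matrix.det (resolventRev_mul hA)
  rwa [Matrix.det_mul, ← Matrix.charpolyRev, charpolyRev_eq_one_of_isNilpotent hA, mul_one,
    Matrix.det_one] at h

theorem resolventRev_eq_add_mul (hA : IsNilpotent A) :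
    resolventRev A = 1 + (X : R[X]) • (resolventRev A * A.map C) := by
  have h := resolventRev_mul hA
  rwa [mul_sub, mul_one, mul_smul_comm, sub_eq_iff_eq_add] at h

theorem resolventRev_eq_add_mul' (hA : IsNilpotent A) :
    resolventRev A = 1 + (X : R[X]) • (A.map C * resolventRev A) := by
  have h := mul_resolventRev hA
  rwa [sub_mul, one_mul, smul_mul_assoc, sub_eq_iff_eq_add] at h

theorem resolventRev_mul_sub_mul_resolventRev (hA : IsNilpotent A) (hB : IsNilpotent B) :
    resolventRev A * (1 - (X : R[X]) • (A + B).map C) * resolventRev B =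
      1 + (-X ^ 2 : R[X]) • (resolventRev A * (A.map C * B.map C) * resolventRev B) := by
  have hexpand : 1 - (X : R[X]) • (A + B).map C = (1 - (X : R[X]) • A.map C) *
      (1 - (X : R[X]) • B.map C) - (X ^ 2 : R[X]) • (A.map C * B.map C) := by
    rw [Matrix.map_add C (map_add C)]
    simp only [mul_sub, sub_mul, one_mul, mul_one, smul_mul_assoc, mul_smul_comm]
    module
  rw [hexpand, mul_sub, sub_mul, ← mul_assoc, resolventRev_mul hA, one_mul, mul_resolventRev hB,
    mul_smul_comm, smul_mul_assoc, neg_smul, sub_eq_add_neg]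

theorem X_sq_dvd_trace_resolventRev_mul (hA : IsNilpotent A) (hB : IsNilpotent B)
    (hAB : IsNilpotent (A + B)) :
    X ^ 2 ∣ (resolventRev A * (A.map C * B.map C) * resolventRev B).trace := by
  have hdet := congr_arg Matrix.det (resolventRev_mul_sub_mul_resolventRev hA hB)
  rw [Matrix.det_mul, Matrix.det_mul, det_resolventRev hA, det_resolventRev hB,
    ← Matrix.charpolyRev, charpolyRev_eq_one_of_isNilpotent hAB, Matrix.det_one_add_smul] at hdet
  exact ⟨eval (-X ^ 2) _, mul_left_cancel₀ (pow_ne_zero 2 X_ne_zero) (by linear_combination hdet)⟩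

theorem exists_resolventRev_mul_eq (hA : IsNilpotent A) (hB : IsNilpotent B) :
    ∃ N : Matrix ι ι R[X], resolventRev A * (A.map C * B.map C) * resolventRev B =
      (A * B).map C + (X : R[X]) • (A ^ 2 * B + A * B ^ 2).map C + (X ^ 2 : R[X]) • N := by
  simp only [Matrix.map_add C (map_add C), Matrix.map_mul, Matrix.map_pow]
  set a := A.map (C : R → R[X])
  set b := B.map (C : R → R[X])
  have ha : resolventRev A = 1 + (X : R[X]) • a + (X ^ 2 : R[X]) • (resolventRev A * (a * a)) := by
    conv_lhs => rw [resolventRev_eq_add_mul hA, resolventRev_eq_add_mul hA]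
    simp only [add_mul, one_mul, smul_mul_assoc, mul_assoc, a]
    module
  have hb : resolventRev B = 1 + (X : R[X]) • b + (X ^ 2 : R[X]) • (b * b * resolventRev B) := by
    conv_lhs => rw [resolventRev_eq_add_mul' hB, resolventRev_eq_add_mul' hB]
    simp only [mul_add, mul_one, mul_smul_comm, mul_assoc, b]
    module
  refine ⟨a ^ 2 * b ^ 2 + resolventRev A * (a * a) * (a * b) * resolventRev B +
    (1 + (X : R[X]) • a) * (a * b) * (b * b * resolventRev B), ?_⟩
  conv_lhs => rw [ha]
  rw [add_mul, add_mul, smul_mul_assoc, smul_mul_assoc]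
  conv_lhs => enter [1]; rw [hb]
  simp only [add_mul, mul_add, one_mul, mul_one, smul_mul_assoc, mul_smul_comm, mul_assoc, sq]
  module

/-- In characteristic two these are not consequences of the vanishing of the traces of the powers
of `A + B`, whence the detour through determinants over `R[X]`. -/
theorem trace_mul_identities (hA : IsNilpotent A) (hB : IsNilpotent B)
    (hAB : IsNilpotent (A + B)) :
    (A * B).trace = 0 ∧ (A ^ 2 * B).trace + (A * B ^ 2).trace = 0 := by
  obtain ⟨N, hN⟩ := exists_resolventRev_mul_eq hA hB
  have hdvd := X_pow_dvd_iff.1 (X_sq_dvd_trace_resolventRev_mul hA hB hAB)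
  have htrace (M : Matrix ι ι R) : (M.map (C : R → R[X])).trace = C M.trace :=
    (AddMonoidHom.map_trace C M).symm
  simp only [hN, Matrix.trace_add, Matrix.trace_smul, htrace, smul_eq_mul] at hdvd
  exact ⟨by simpa [coeff_X_pow_mul'] using hdvd 0 two_pos,
    by simpa [coeff_X_pow_mul'] using hdvd 1 one_lt_two⟩

end TraceIdentities

section RankOnePerturbation

variable {K E : Type*} [Field K] [AddCommGroup E] [Module K E] {M : Module.End K E}
  {f : Module.Dual K E} {u : E}

theorem add_smulRight_pow_succ_apply (M : Module.End K E) (f : Module.Dual K E) (u : E) (k : ℕ) :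
    ((M + f.smulRight u) ^ (k + 1)) u = (M ^ (k + 1)) u +
      ∑ ij ∈ Finset.HasAntidiagonal.antidiagonal k,
        f (((M + f.smulRight u) ^ ij.2) u) • (M ^ ij.1) u := by
  induction k with
  | zero => simp
  | succ k ih =>
    have hM (j : ℕ) (x : E) : (M ^ (j + 1)) x = M ((M ^ j) x) := by
      rw [pow_succ', Module.End.mul_apply]
    rw [pow_succ' _ (k + 1), Module.End.mul_apply, LinearMap.add_apply]
    conv_lhs => enter [1]; rw [ih]
    rw [Finset.Nat.sum_antidiagonal_succ, hM (k + 1), LinearMap.smulRight_apply, map_add, map_sum]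
    simp only [map_smul, hM, pow_zero, Module.End.one_apply]
    abel

open Polynomial in
theorem exists_polynomial_coeff_eq_apply_pow (hM : IsNilpotent M) (f : Module.Dual K E) (u : E) :
    ∃ p : K[X], ∀ k, p.coeff k = f ((M ^ k) u) := by
  obtain ⟨m, hm⟩ := hM
  refine ⟨∑ k ∈ Finset.range m, monomial k (f ((M ^ k) u)), fun k ↦ ?_⟩
  simp only [finsetSum_coeff, coeff_monomial, Finset.sum_ite_eq', Finset.mem_range]
  split_ifs with hk
  · rfl
  · simp [pow_eq_zero_of_le (not_lt.1 hk) hm]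

open Polynomial in
/-- The generating polynomials `p` of `f (M ^ k u)` and `q` of `f (N ^ k u)`, for
`N = M + u ⊗ f`, satisfy `q = p + X p q`, which is impossible for degree reasons unless `p = 0`. -/
theorem apply_pow_eq_zero_of_isNilpotent_add_smulRight (hM : IsNilpotent M)
    (hMf : IsNilpotent (M + f.smulRight u)) (k : ℕ) : f ((M ^ k) u) = 0 := by
  obtain ⟨p, hp⟩ := exists_polynomial_coeff_eq_apply_pow hM f u
  obtain ⟨q, hq⟩ := exists_polynomial_coeff_eq_apply_pow hMf f u
  have hpq : q = p + X * (p * q) := by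
    ext (_ | k)
    · simp [hp, hq]
    · rw [coeff_add, coeff_X_mul, coeff_mul, hq, hp, add_smulRight_pow_succ_apply, map_add,
        map_sum]
      simp only [hp, hq, map_smul, smul_eq_mul, mul_comm]
  suffices p = 0 by rw [← hp, this, coeff_zero]
  by_contra hp0
  have hq0 : q ≠ 0 := fun h ↦ hp0 (by simpa [h] using hpq.symm)
  have hdeg : (X * (p * q)).natDegree = p.natDegree + q.natDegree + 1 := by
    rw [natDegree_X_mul (mul_ne_zero hp0 hq0), natDegree_mul hp0 hq0]
  have hle := natDegree_sub_le q p
  rw [sub_eq_of_eq_add' hpq, hdeg] at hle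
  omega

end RankOnePerturbation

open Module

theorem finrank_map_add_finrank_inf_ker {K E F : Type*} [Field K] [AddCommGroup E] [Module K E]
    [AddCommGroup F] [Module K F] (f : E →ₗ[K] F) (p : Submodule K E) [FiniteDimensional K p] :
    finrank K (p.map f) + finrank K (p ⊓ LinearMap.ker f : Submodule K E) = finrank K p := by
  rw [← LinearMap.finrank_range_add_finrank_ker (f.domRestrict p), LinearMap.range_domRestrict,
    LinearMap.ker_domRestrict, ← Submodule.map_comap_subtype, Submodule.finrank_map_subtype_eq]

theorem finrank_quotient_span_singleton_add_one {K E : Type*} [Field K] [AddCommGroup E]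
    [Module K E] [FiniteDimensional K E] {x : E} (hx : x ≠ 0) :
    finrank K (E ⧸ K ∙ x) + 1 = finrank K E := by
  rw [← (K ∙ x).finrank_quotient_add_finrank, finrank_span_singleton hx]

section Definitions

variable {K E : Type*} [Field K] [AddCommGroup E] [Module K E]

/-- A linear space of endomorphisms is nilpotent if all its elements are. -/
def IsNilSubspace (V : Submodule K (End K E)) : Prop :=
  ∀ M ∈ V, IsNilpotent M

/-- The subspace `V x = {M x | M ∈ V}` of `E`. -/
def evalRange (V : Submodule K (End K E)) (x : E) : Submodule K E :=
  V.map (LinearMap.applyₗ x)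

/-- The subspace of those elements of `V` which kill `x`. -/
def evalKer (V : Submodule K (End K E)) (x : E) : Submodule K (End K E) :=
  V ⊓ LinearMap.ker (LinearMap.applyₗ x : End K E →ₗ[K] E)

/-- The space of linear forms `f` such that the rank one endomorphism `x ⊗ f = f.smulRight x` lies
in `V`. -/
def rankOneForms (V : Submodule K (End K E)) (x : E) : Submodule K (Dual K E) :=
  V.comap (LinearMap.smulRightₗ.flip x)

/-- The subspace `K x + V x` of `E`. -/
def spanEvalRange (V : Submodule K (End K E)) (x : E) : Submodule K E :=
  K ∙ x ⊔ evalRange V x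

/-- The space of endomorphisms of `E / K x` induced by the elements of `V` which kill `x`. -/
def inducedQuotient (V : Submodule K (End K E)) (x : E) : Submodule K (End K (E ⧸ K ∙ x)) :=
  ((evalKer V x).map (LinearMap.compRight K (K ∙ x).mkQ)).comap
    (LinearMap.lcomp K (E ⧸ K ∙ x) (K ∙ x).mkQ)

variable {V : Submodule K (End K E)} {x y : E}

theorem mem_evalRange : y ∈ evalRange V x ↔ ∃ M ∈ V, M x = y := Iff.rfl

theorem mem_evalKer {M : End K E} : M ∈ evalKer V x ↔ M ∈ V ∧ M x = 0 := Iff.rfl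

theorem mem_rankOneForms {f : Dual K E} : f ∈ rankOneForms V x ↔ f.smulRight x ∈ V := Iff.rfl

theorem mem_inducedQuotient {T : End K (E ⧸ K ∙ x)} :
    T ∈ inducedQuotient V x ↔
      ∃ M ∈ V, M x = 0 ∧ ∀ z, (K ∙ x).mkQ (M z) = T ((K ∙ x).mkQ z) := by
  constructor
  · rintro ⟨M, hM, hMT⟩
    exact ⟨M, hM.1, hM.2, fun z ↦ LinearMap.congr_fun hMT z⟩
  · rintro ⟨M, hM, hMx, hMT⟩
    exact ⟨M, ⟨hM, hMx⟩, LinearMap.ext hMT⟩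

theorem mem_spanEvalRange : y ∈ spanEvalRange V x ↔ ∃ a : K, ∃ M ∈ V, y = a • x + M x := by
  simp only [spanEvalRange, Submodule.mem_sup, Submodule.mem_span_singleton, mem_evalRange]
  constructor
  · rintro ⟨_, ⟨a, rfl⟩, _, ⟨M, hM, rfl⟩, rfl⟩
    exact ⟨a, M, hM, rfl⟩
  · rintro ⟨a, M, hM, rfl⟩
    exact ⟨_, ⟨a, rfl⟩, _, ⟨M, hM, rfl⟩, rfl⟩

theorem self_mem_spanEvalRange (V : Submodule K (End K E)) (x : E) : x ∈ spanEvalRange V x :=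
  Submodule.mem_sup_left (Submodule.mem_span_singleton_self x)

theorem apply_mem_spanEvalRange {M : End K E} (hM : M ∈ V) (x : E) : M x ∈ spanEvalRange V x :=
  Submodule.mem_sup_right ⟨M, hM, rfl⟩

theorem mem_dualAnnihilator_spanEvalRange {f : Dual K E} :
    f ∈ (spanEvalRange V x).dualAnnihilator ↔ f x = 0 ∧ ∀ M ∈ V, f (M x) = 0 := by
  rw [Submodule.mem_dualAnnihilator]
  refine ⟨fun h ↦ ⟨h x (self_mem_spanEvalRange V x), fun M hM ↦ h _ (apply_mem_spanEvalRange hM x)⟩,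
    fun ⟨hx, hM⟩ y hy ↦ ?_⟩
  obtain ⟨a, M, hMV, rfl⟩ := mem_spanEvalRange.1 hy
  simp [hx, hM M hMV]

end Definitions

section Nilpotent

variable {K E : Type*} [Field K] [AddCommGroup E] [Module K E]

theorem eq_zero_of_apply_eq_smul {M : End K E} (hM : IsNilpotent M) {x : E} {a : K} (hx : x ≠ 0)
    (h : M x = a • x) : a = 0 := by
  obtain ⟨k, hk⟩ := hM
  have hpow := Module.End.HasEigenvector.pow_apply (f := M) (μ := a) (v := x)
    ⟨Module.End.mem_eigenspace_iff.2 h, hx⟩ k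
  rw [hk, LinearMap.zero_apply, eq_comm, smul_eq_zero_iff_left hx] at hpow
  exact eq_zero_of_pow_eq_zero hpow

theorem trace_mul_smulRight [FiniteDimensional K E] (M : End K E) (f : Dual K E) (x : E) :
    LinearMap.trace K E (M * f.smulRight x) = f (M x) := by
  have : M * f.smulRight x = f.smulRight (M x) := by ext z; simp
  rw [this, LinearMap.trace_smulRight]

namespace IsNilSubspace

variable {V : Submodule K (End K E)} {M N P : End K E} {x : E}

protected theorem inducedQuotient (hV : IsNilSubspace V) (x : E) :
    IsNilSubspace (inducedQuotient V x) := by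
  intro T hT
  obtain ⟨M, hM, -, hMT⟩ := mem_inducedQuotient.1 hT
  obtain ⟨k, hk⟩ := hV M hM
  refine ⟨k, LinearMap.cancel_right (Submodule.mkQ_surjective _) |>.1 ?_⟩
  rw [Module.End.commute_pow_left_of_commute (LinearMap.ext fun z ↦ (hMT z).symm) k, hk]
  simp

theorem finrank_spanEvalRange [FiniteDimensional K E] (hV : IsNilSubspace V) (hx : x ≠ 0) :
    finrank K (spanEvalRange V x) = finrank K (evalRange V x) + 1 := by
  have hdisj : (K ∙ x) ⊓ evalRange V x = ⊥ := by
    refine eq_bot_iff.2 fun y ⟨hy, M, hM, hMy⟩ ↦ ?_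
    obtain ⟨a, rfl⟩ := Submodule.mem_span_singleton.1 hy
    rw [eq_zero_of_apply_eq_smul (hV M hM) hx hMy, zero_smul]
    exact Submodule.zero_mem _
  have h := Submodule.finrank_sup_add_finrank_inf_eq (K ∙ x) (evalRange V x)
  rw [hdisj, finrank_bot, finrank_span_singleton hx] at h
  rw [spanEvalRange]
  omega

theorem trace_sq_mul_self (hV : IsNilSubspace V) (hM : M ∈ V) :
    LinearMap.trace K E (M ^ 2 * M) = 0 :=
  (LinearMap.isNilpotent_trace_of_isNilpotent
    ((Commute.refl M).pow_left 2 |>.isNilpotent_mul_left (hV M hM))).eq_zero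

section Trace

variable [FiniteDimensional K E]

theorem trace_identities (hV : IsNilSubspace V) (hM : M ∈ V) (hN : N ∈ V) :
    LinearMap.trace K E (M * N) = 0 ∧
      LinearMap.trace K E (M ^ 2 * N) + LinearMap.trace K E (M * N ^ 2) = 0 := by
  let φ := LinearMap.toMatrixAlgEquiv (finBasis K E)
  have hφ {T : End K E} (hT : T ∈ V) : IsNilpotent (φ T) := (hV T hT).map φ
  have htrace (T : End K E) : LinearMap.trace K E T = (φ T).trace :=
    LinearMap.trace_eq_matrix_trace K (finBasis K E) T
  simp only [htrace, map_mul, map_pow]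
  exact trace_mul_identities (hφ hM) (hφ hN) (by rw [← map_add]; exact hφ (V.add_mem hM hN))

theorem trace_mul (hV : IsNilSubspace V) (hM : M ∈ V) (hN : N ∈ V) :
    LinearMap.trace K E (M * N) = 0 :=
  (hV.trace_identities hM hN).1

theorem trace_sq_mul_add (hV : IsNilSubspace V) (hM : M ∈ V) (hN : N ∈ V) :
    LinearMap.trace K E (M ^ 2 * N) + LinearMap.trace K E (M * N ^ 2) = 0 :=
  (hV.trace_identities hM hN).2

theorem trace_add_sq_mul (hV : IsNilSubspace V) (hM : M ∈ V) (hN : N ∈ V) (hP : P ∈ V) :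
    LinearMap.trace K E ((M + N) ^ 2 * P) =
      LinearMap.trace K E (M ^ 2 * P) + LinearMap.trace K E (N ^ 2 * P) := by
  have h := hV.trace_sq_mul_add (V.add_mem hM hN) hP
  rw [add_mul M N, map_add] at h
  linear_combination h - hV.trace_sq_mul_add hM hP - hV.trace_sq_mul_add hN hP

theorem trace_anticommutator_mul (hV : IsNilSubspace V) (hM : M ∈ V) (hN : N ∈ V) (hP : P ∈ V) :
    LinearMap.trace K E ((M * N + N * M) * P) = 0 := by
  have hsq : (M * N + N * M) * P = (M + N) ^ 2 * P - M ^ 2 * P - N ^ 2 * P := by noncomm_ring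
  rw [hsq, map_sub, map_sub, hV.trace_add_sq_mul hM hN hP]
  ring

end Trace

end IsNilSubspace

theorem exists_dual_eq_one_of_notMem {p : Submodule K E} {x : E} (hx : x ∉ p) :
    ∃ f : Dual K E, f x = 1 ∧ ∀ y ∈ p, f y = 0 := by
  obtain ⟨f, hfx, hf⟩ := p.exists_le_ker_of_notMem hx
  exact ⟨(f x)⁻¹ • f, by simp [hfx], fun y hy ↦ by simp [LinearMap.mem_ker.1 (hf hy)]⟩

theorem exists_smulRight_eq_of_forall_mem_span {M : End K E} {x : E} (hx : x ≠ 0)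
    (hM : ∀ z, M z ∈ K ∙ x) : ∃ f : Dual K E, f.smulRight x = M := by
  obtain ⟨f, hfx, -⟩ :=
    exists_dual_eq_one_of_notMem (p := (⊥ : Submodule K E)) (by simpa using hx)
  refine ⟨f ∘ₗ M, LinearMap.ext fun z ↦ ?_⟩
  obtain ⟨a, ha⟩ := Submodule.mem_span_singleton.1 (hM z)
  simp [← ha, hfx]

theorem finrank_evalRange_add_finrank_evalKer [FiniteDimensional K E] (V : Submodule K (End K E))
    (x : E) : finrank K (evalRange V x) + finrank K (evalKer V x) = finrank K V :=
  finrank_map_add_finrank_inf_ker _ V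

theorem finrank_evalKer_le [FiniteDimensional K E] (V : Submodule K (End K E)) {x : E}
    (hx : x ≠ 0) :
    finrank K (evalKer V x) ≤
      finrank K (inducedQuotient V x) + finrank K (rankOneForms V x) := by
  let π := LinearMap.compRight K (M := E) (K ∙ x).mkQ
  let ρ := LinearMap.lcomp K (E ⧸ K ∙ x) (K ∙ x).mkQ
  have hrange : (evalKer V x).map π ≤ LinearMap.range ρ := by
    rintro _ ⟨M, hM, rfl⟩
    have hle : K ∙ x ≤ LinearMap.ker (π M) := by
      rw [Submodule.span_singleton_le_iff_mem, LinearMap.mem_ker]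
      simp [π, (mem_evalKer.1 hM).2]
    exact ⟨(K ∙ x).liftQ (π M) hle, (K ∙ x).liftQ_mkQ (π M) hle⟩
  have hquot : finrank K ((evalKer V x).map π) ≤ finrank K (inducedQuotient V x) := by
    rw [← Submodule.map_comap_eq_of_le hrange]
    exact Submodule.finrank_map_le ρ _
  have hker : evalKer V x ⊓ LinearMap.ker π ≤
      (rankOneForms V x).map (LinearMap.smulRightₗ.flip x) := by
    rintro M ⟨hM, hMπ⟩
    obtain ⟨f, rfl⟩ := exists_smulRight_eq_of_forall_mem_span hx fun z ↦ by
      simpa [π] using LinearMap.congr_fun (LinearMap.mem_ker.1 hMπ) z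
    exact ⟨f, hM.1, rfl⟩
  calc finrank K (evalKer V x)
      = finrank K ((evalKer V x).map π) +
          finrank K (evalKer V x ⊓ LinearMap.ker π : Submodule K (End K E)) :=
        (finrank_map_add_finrank_inf_ker π (evalKer V x)).symm
    _ ≤ _ := add_le_add hquot ((Submodule.finrank_mono hker).trans (Submodule.finrank_map_le _ _))

namespace IsNilSubspace

variable {V : Submodule K (End K E)} {M : End K E} {f : Dual K E} {x : E}

theorem apply_pow_eq_zero (hV : IsNilSubspace V) (hf : f.smulRight x ∈ V) (hM : M ∈ V) (k : ℕ) :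
    f ((M ^ k) x) = 0 :=
  apply_pow_eq_zero_of_isNilpotent_add_smulRight (hV M hM) (hV _ (V.add_mem hM hf)) k

theorem rankOneForms_le (hV : IsNilSubspace V) (x : E) :
    rankOneForms V x ≤ (spanEvalRange V x).dualAnnihilator := fun f hf ↦
  mem_dualAnnihilator_spanEvalRange.2 ⟨by simpa using hV.apply_pow_eq_zero hf V.zero_mem 0,
    fun M hM ↦ by simpa using hV.apply_pow_eq_zero hf hM 1⟩

variable [FiniteDimensional K E]

theorem finrank_evalRange_add_finrank_dualAnnihilator (hV : IsNilSubspace V) (hx : x ≠ 0) :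
    finrank K (evalRange V x) + finrank K (spanEvalRange V x).dualAnnihilator + 1 =
      finrank K E := by
  rw [← Subspace.finrank_add_finrank_dualAnnihilator_eq (spanEvalRange V x),
    hV.finrank_spanEvalRange hx]
  omega

theorem finrank_evalRange_lt_of_dualAnnihilator_le (hV : IsNilSubspace V) (hx : x ≠ 0)
    {U : Submodule K E} {F : Submodule K (Dual K E)}
    (hU : U.dualAnnihilator ≤ rankOneForms V x ⊔ F) :
    finrank K (evalRange V x) < finrank K U + finrank K F := by
  have hle := (Submodule.finrank_mono hU).trans (Submodule.finrank_add_le_finrank_add_finrank _ _)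
  have hU' := Subspace.finrank_add_finrank_dualAnnihilator_eq U
  have hx' := hV.finrank_evalRange_add_finrank_dualAnnihilator hx
  have := Submodule.finrank_mono (hV.rankOneForms_le x)
  omega

theorem finrank_le {E : Type*} [AddCommGroup E] [Module K E] [FiniteDimensional K E]
    {V : Submodule K (End K E)} (hV : IsNilSubspace V) :
    finrank K V ≤ (finrank K E).choose 2 := by
  induction hn : finrank K E generalizing E with
  | zero =>
    have := finrank_zero_iff.1 hn
    rw [finrank_zero_of_subsingleton]
    exact Nat.zero_le _
  | succ n ih =>
    have := nontrivial_of_finrank_eq_succ hn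
    obtain ⟨x, hx⟩ := exists_ne (0 : E)
    have hquot : finrank K (E ⧸ K ∙ x) = n := by
      have := finrank_quotient_span_singleton_add_one (K := K) hx
      omega
    have hV' := ih (hV.inducedQuotient x) hquot
    have := finrank_evalRange_add_finrank_evalKer V x
    have := finrank_evalKer_le V hx
    have := Submodule.finrank_mono (hV.rankOneForms_le x)
    have := hV.finrank_evalRange_add_finrank_dualAnnihilator hx
    have : (n + 1).choose 2 = n + n.choose 2 := by
      rw [Nat.choose_succ_succ' n 1, Nat.choose_one_right]
    omega

end IsNilSubspace

end Nilpotent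

section MaxNilSubspace

variable {K E : Type*} [Field K] [AddCommGroup E] [Module K E]

theorem apply_apply_eq_zero_of_eq_add {M : End K E} (hM : IsNilpotent M) {x : E} {a b : K}
    (h : M (M x) = a • x + b • M x) : M (M x) = 0 := by
  rcases eq_or_ne (M x) 0 with hMx | hMx
  · rw [hMx, map_zero]
  have hx : x ≠ 0 := fun hx ↦ hMx (by rw [hx, map_zero])
  have ha : a = 0 := by
    have hcomm : Commute M (M - b • 1) :=
      (Commute.refl M).sub_right ((Commute.one_right M).smul_right b)
    exact eq_zero_of_apply_eq_smul (hcomm.isNilpotent_mul_right hM) hx (by simp [h])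
  have hb : b = 0 := eq_zero_of_apply_eq_smul hM hMx (by simpa [ha] using h)
  simpa [ha, hb] using h

/-- A nilpotent space of endomorphisms attaining the bound `IsNilSubspace.finrank_le`. -/
structure IsMaxNilSubspace (V : Submodule K (End K E)) : Prop where
  isNilSubspace : IsNilSubspace V
  finrank_eq : finrank K V = (finrank K E).choose 2

namespace IsMaxNilSubspace

variable [FiniteDimensional K E] {V : Submodule K (End K E)} {M N : End K E} {f : Dual K E}
  {x y : E}

theorem finrank_inducedQuotient_and_rankOneForms (hV : IsMaxNilSubspace V) (hx : x ≠ 0) :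
    finrank K (inducedQuotient V x) = (finrank K (E ⧸ K ∙ x)).choose 2 ∧
      finrank K (spanEvalRange V x).dualAnnihilator ≤ finrank K (rankOneForms V x) := by
  have hquot := finrank_quotient_span_singleton_add_one (K := K) hx
  have hV' := (hV.isNilSubspace.inducedQuotient x).finrank_le
  have hsplit := finrank_evalRange_add_finrank_evalKer V x
  have hker := finrank_evalKer_le V hx
  have hforms := hV.isNilSubspace.finrank_evalRange_add_finrank_dualAnnihilator hx
  have hforms' := Submodule.finrank_mono (hV.isNilSubspace.rankOneForms_le x)
  have hchoose := Nat.choose_succ_succ' (finrank K (E ⧸ K ∙ x)) 1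
  rw [Nat.choose_one_right, one_add_one_eq_two, hquot, ← hV.finrank_eq] at hchoose
  constructor <;> omega

protected theorem inducedQuotient (hV : IsMaxNilSubspace V) (hx : x ≠ 0) :
    IsMaxNilSubspace (inducedQuotient V x) :=
  ⟨hV.isNilSubspace.inducedQuotient x, (hV.finrank_inducedQuotient_and_rankOneForms hx).1⟩

theorem rankOneForms_eq (hV : IsMaxNilSubspace V) (hx : x ≠ 0) :
    rankOneForms V x = (spanEvalRange V x).dualAnnihilator :=
  Submodule.eq_of_le_of_finrank_le (hV.isNilSubspace.rankOneForms_le x)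
    (hV.finrank_inducedQuotient_and_rankOneForms hx).2

theorem smulRight_mem (hV : IsMaxNilSubspace V) (hx : x ≠ 0) (hfx : f x = 0)
    (hf : ∀ M ∈ V, f (M x) = 0) : f.smulRight x ∈ V := by
  rw [← mem_rankOneForms, hV.rankOneForms_eq hx]
  exact mem_dualAnnihilator_spanEvalRange.2 ⟨hfx, hf⟩

theorem mem_spanEvalRange_of_forall (hV : IsMaxNilSubspace V) (hx : x ≠ 0)
    (h : ∀ f : Dual K E, f.smulRight x ∈ V → f y = 0) : y ∈ spanEvalRange V x := by
  refine (Subspace.forall_mem_dualAnnihilator_apply_eq_zero_iff _ _).1 fun f hf ↦ h f ?_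
  rwa [← mem_rankOneForms, hV.rankOneForms_eq hx]

theorem pow_apply_mem_spanEvalRange (hV : IsMaxNilSubspace V) (hx : x ≠ 0) (hM : M ∈ V) (k : ℕ) :
    (M ^ k) x ∈ spanEvalRange V x :=
  hV.mem_spanEvalRange_of_forall hx fun _ hf ↦ hV.isNilSubspace.apply_pow_eq_zero hf hM k

theorem apply_apply_mem_spanEvalRange (hV : IsMaxNilSubspace V) (hx : x ≠ 0) (hM : M ∈ V) :
    M (M x) ∈ spanEvalRange V x := by
  simpa [sq] using hV.pow_apply_mem_spanEvalRange hx hM 2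

theorem anticommutator_apply_mem_spanEvalRange (hV : IsMaxNilSubspace V) (hx : x ≠ 0) (hM : M ∈ V)
    (hN : N ∈ V) : M (N x) + N (M x) ∈ spanEvalRange V x := by
  have hsq : M (N x) + N (M x) = (M + N) ((M + N) x) - M (M x) - N (N x) := by
    simp only [LinearMap.add_apply, map_add]
    abel
  rw [hsq]
  exact sub_mem (sub_mem (hV.apply_apply_mem_spanEvalRange hx (V.add_mem hM hN))
    (hV.apply_apply_mem_spanEvalRange hx hM)) (hV.apply_apply_mem_spanEvalRange hx hN)

theorem apply_mem_spanEvalRange_of_mem (hV : IsMaxNilSubspace V) (hx : x ≠ 0) (hM : M ∈ V)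
    (hMx : M x = 0) (hy : y ∈ spanEvalRange V x) : M y ∈ spanEvalRange V x := by
  obtain ⟨a, N, hN, rfl⟩ := mem_spanEvalRange.1 hy
  simpa [hMx] using hV.anticommutator_apply_mem_spanEvalRange hx hM hN

/-- A vector `y` spanning `V x` is killed by every `M ∈ V` with `M x = y`, hence by all of `V`. -/
theorem exists_evalRange_eq_bot (hV : IsMaxNilSubspace V) (hx : x ≠ 0)
    (hVx : finrank K (evalRange V x) = 1) : ∃ y ≠ 0, evalRange V y = ⊥ := by
  obtain ⟨⟨y, M₀, hM₀, hM₀x⟩, hy, hspan⟩ := finrank_eq_one_iff'.1 hVx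
  replace hM₀x : M₀ x = y := hM₀x
  have hy0 : y ≠ 0 := fun h ↦ hy (Subtype.ext h)
  have hmul {M : End K E} (hM : M ∈ V) : ∃ c : K, M x = c • y :=
    (hspan ⟨M x, M, hM, rfl⟩).imp fun c hc ↦ (congr_arg Subtype.val hc).symm
  have hkill {M : End K E} (hM : M ∈ V) (hMx : M x = y) : M y = 0 := by
    obtain ⟨a, N, hN, hMy⟩ := mem_spanEvalRange.1 (hV.apply_apply_mem_spanEvalRange hx hM)
    obtain ⟨c, hc⟩ := hmul hN
    rw [← hMx]
    exact apply_apply_eq_zero_of_eq_add (hV.isNilSubspace M hM) (by rw [hMy, hc, hMx])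
  refine ⟨y, hy0, eq_bot_iff.2 ?_⟩
  rintro _ ⟨N, hN, rfl⟩
  obtain ⟨c, hc⟩ := hmul hN
  have hsum := hkill (V.add_mem hN (V.smul_mem (1 - c) hM₀)) (by
    rw [LinearMap.add_apply, LinearMap.smul_apply, hc, hM₀x]; module)
  simpa [hkill hM₀ hM₀x] using hsum

end IsMaxNilSubspace

end MaxNilSubspace

section DimensionThree

theorem exists_ne_zero_apply_eq_zero_of_isAlt {K W : Type*} [Field K] [AddCommGroup W] [Module K W]
    {B : W →ₗ[K] W →ₗ[K] K} (hW : finrank K W = 3) (hB : B.IsAlt) : ∃ v ≠ 0, B v = 0 := by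
  have := FiniteDimensional.of_finrank_eq_succ hW
  let b := finBasisOfFinrankEq K W hW
  let v := B (b 1) (b 2) • b 0 + B (b 2) (b 0) • b 1 + B (b 0) (b 1) • b 2
  rcases ne_or_eq v 0 with hv | hv
  · refine ⟨v, hv, b.ext fun i ↦ ?_⟩
    fin_cases i <;> simp [v, hB.self_eq_zero, ← hB.neg (b 0) (b 1), ← hB.neg (b 1) (b 2),
      ← hB.neg (b 2) (b 0), mul_comm]
  · refine ⟨b 0, b.ne_zero 0, b.ext fun i ↦ ?_⟩
    have hcoeff : ∀ i, b.repr v i = 0 := by simp [hv]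
    have h20 : B (b 2) (b 0) = 0 := by simpa [v] using hcoeff 1
    have h01 : B (b 0) (b 1) = 0 := by simpa [v] using hcoeff 2
    fin_cases i
    · exact hB.self_eq_zero (b 0)
    · exact h01
    · rw [← hB.neg]
      exact neg_eq_zero.2 h20

variable {K E : Type*} [Field K] [AddCommGroup E] [Module K E] [FiniteDimensional K E]
  {V : Submodule K (End K E)}

namespace IsNilSubspace

theorem trace_sq_mul_eq_zero_of_sq_ne {a : K} (ha : a ^ 2 ≠ a) (hV : IsNilSubspace V)
    {M N : End K E} (hM : M ∈ V) (hN : N ∈ V) : LinearMap.trace K E (M ^ 2 * N) = 0 := by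
  have h := hV.trace_sq_mul_add hM hN
  have ha' := hV.trace_sq_mul_add hM (V.smul_mem a hN)
  simp only [smul_pow, mul_smul_comm, map_smul, smul_eq_mul] at ha'
  have hprod : (a ^ 2 - a) * LinearMap.trace K E (M ^ 2 * N) = 0 := by
    linear_combination a ^ 2 * h - ha'
  exact (mul_eq_zero.1 hprod).resolve_left (sub_ne_zero.2 ha)

/-- Over `𝔽₂`, the form `tr (M ^ 2 N)` on `V` is bilinear and alternating, hence degenerate when
`V` has dimension three; over any other field it vanishes. -/
theorem exists_trace_sq_mul_eq_zero (hV : IsNilSubspace V) (hdim : finrank K V = 3) :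
    ∃ M ∈ V, M ≠ 0 ∧ ∀ N ∈ V, LinearMap.trace K E (M ^ 2 * N) = 0 := by
  by_cases hK : ∃ a : K, a ^ 2 ≠ a
  · obtain ⟨a, ha⟩ := hK
    obtain ⟨M, hM, hM0⟩ := V.ne_bot_iff.1 (Submodule.one_le_finrank_iff.1 (by omega))
    exact ⟨M, hM, hM0, fun N hN ↦ hV.trace_sq_mul_eq_zero_of_sq_ne ha hM hN⟩
  push Not at hK
  let B : V →ₗ[K] V →ₗ[K] K := LinearMap.mk₂ K
    (fun M N ↦ LinearMap.trace K E ((M : End K E) ^ 2 * N))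
    (fun M M' N ↦ hV.trace_add_sq_mul M.2 M'.2 N.2)
    (fun a M N ↦ by simp [smul_pow, hK a])
    (fun M N N' ↦ by simp [mul_add])
    (fun a M N ↦ by simp)
  obtain ⟨M, hM0, hM⟩ := exists_ne_zero_apply_eq_zero_of_isAlt (B := B) hdim
    fun M ↦ hV.trace_sq_mul_self M.2
  exact ⟨M, M.2, by simpa using hM0, fun N hN ↦ LinearMap.congr_fun hM ⟨N, hN⟩⟩

end IsNilSubspace

theorem pow_finrank_eq_zero_of_isNilpotent {M : End K E} (hM : IsNilpotent M) :
    M ^ finrank K E = 0 := by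
  have h := M.aeval_self_charpoly
  rwa [hM.charpoly_eq_X_pow_finrank, map_pow, Polynomial.aeval_X] at h

theorem IsNilSubspace.exists_sq_eq_zero (hV : IsNilSubspace V) (hE : finrank K E = 3)
    (hdim : finrank K V = 3) :
    ∃ R : End K E, R ≠ 0 ∧ R * R = 0 ∧ ∀ N ∈ V, LinearMap.trace K E (N * R) = 0 := by
  obtain ⟨M, hM, hM0, htrace⟩ := hV.exists_trace_sq_mul_eq_zero hdim
  by_cases hsq : M * M = 0
  · exact ⟨M, hM0, hsq, fun N hN ↦ hV.trace_mul hN hM⟩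
  · refine ⟨M * M, hsq, ?_, fun N hN ↦ ?_⟩
    · have hcube := pow_finrank_eq_zero_of_isNilpotent (hV M hM)
      rw [hE, pow_three] at hcube
      rw [mul_assoc, hcube, mul_zero]
    · rw [LinearMap.trace_mul_comm, ← sq, htrace N hN]

theorem exists_smulRight_eq_of_sq_eq_zero (hE : finrank K E = 3) {R : End K E} (hR0 : R ≠ 0)
    (hR : R * R = 0) : ∃ x ≠ 0, ∃ f : Dual K E, f.smulRight x = R := by
  have hle : LinearMap.range R ≤ LinearMap.ker R := by
    rintro _ ⟨z, rfl⟩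
    exact LinearMap.congr_fun hR z
  have hrank : finrank K (LinearMap.range R) ≤ 1 := by
    have := Submodule.finrank_mono hle
    have := R.finrank_range_add_finrank_ker
    omega
  obtain ⟨x, hx, hx0⟩ := (Submodule.ne_bot_iff _).1 (LinearMap.range_eq_bot.not.2 hR0)
  have hspan : K ∙ x = LinearMap.range R :=
    Submodule.eq_of_le_of_finrank_le ((Submodule.span_singleton_le_iff_mem _ _).2 hx)
      (by rwa [finrank_span_singleton hx0])
  exact ⟨x, hx0, exists_smulRight_eq_of_forall_mem_span hx0 fun z ↦ hspan ▸ R.mem_range_self z⟩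

theorem IsNilSubspace.exists_finrank_evalRange_le_one (hV : IsNilSubspace V)
    (hE : finrank K E = 3) (hdim : finrank K V = 3) :
    ∃ x ≠ 0, finrank K (evalRange V x) ≤ 1 := by
  obtain ⟨R, hR0, hR, htrace⟩ := hV.exists_sq_eq_zero hE hdim
  obtain ⟨x, hx, f, rfl⟩ := exists_smulRight_eq_of_sq_eq_zero hE hR0 hR
  refine ⟨x, hx, ?_⟩
  have hfx : f x = 0 := by
    have hRx := LinearMap.congr_fun hR x
    simpa [hx] using hRx
  have hf : f ∈ (spanEvalRange V x).dualAnnihilator :=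
    mem_dualAnnihilator_spanEvalRange.2
      ⟨hfx, fun M hM ↦ by rw [← trace_mul_smulRight, htrace M hM]⟩
  have hf0 : f ≠ 0 := by
    rintro rfl
    exact hR0 (by ext; simp)
  have hpos := Submodule.one_le_finrank_iff.2 ((Submodule.ne_bot_iff _).2 ⟨f, hf, hf0⟩)
  have := hV.finrank_evalRange_add_finrank_dualAnnihilator hx
  omega

end DimensionThree

section Restriction

variable {K E : Type*} [Field K] [AddCommGroup E] [Module K E]

/-- The space of endomorphisms of `W` induced by the elements of `V` which preserve `W`. -/
def inducedRestrict (V : Submodule K (End K E)) (W : Submodule K E) : Submodule K (End K W) :=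
  (V.map (LinearMap.lcomp K E W.subtype)).comap (LinearMap.compRight K W.subtype)

variable {V : Submodule K (End K E)} {W : Submodule K E}

theorem mem_inducedRestrict {T : End K W} :
    T ∈ inducedRestrict V W ↔ ∃ M ∈ V, ∀ z : W, M z = T z := by
  constructor
  · rintro ⟨M, hM, hMT⟩
    exact ⟨M, hM, fun z ↦ LinearMap.congr_fun hMT z⟩
  · rintro ⟨M, hM, hMT⟩
    exact ⟨M, hM, LinearMap.ext hMT⟩

theorem restrict_mem_inducedRestrict {M : End K E} (hM : M ∈ V) (hMW : ∀ x ∈ W, M x ∈ W) :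
    M.restrict hMW ∈ inducedRestrict V W :=
  mem_inducedRestrict.2 ⟨M, hM, fun _ ↦ rfl⟩

theorem IsNilSubspace.inducedRestrict (hV : IsNilSubspace V) (W : Submodule K E) :
    IsNilSubspace (inducedRestrict V W) := by
  intro T hT
  obtain ⟨M, hM, hMT⟩ := mem_inducedRestrict.1 hT
  obtain ⟨k, hk⟩ := hV M hM
  refine ⟨k, LinearMap.cancel_left W.injective_subtype |>.1 ?_⟩
  rw [← Module.End.commute_pow_left_of_commute (LinearMap.ext hMT) k, hk]
  simp

theorem map_subtype_evalRange_inducedRestrict (hW : ∀ M ∈ V, ∀ x ∈ W, M x ∈ W) (x : W) :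
    (evalRange (inducedRestrict V W) x).map W.subtype = evalRange V x := by
  apply le_antisymm
  · rintro _ ⟨_, ⟨T, hT, rfl⟩, rfl⟩
    obtain ⟨M, hM, hMT⟩ := mem_inducedRestrict.1 hT
    exact ⟨M, hM, hMT x⟩
  · rintro _ ⟨M, hM, rfl⟩
    exact ⟨_, ⟨_, restrict_mem_inducedRestrict hM (hW M hM), rfl⟩, rfl⟩

theorem finrank_evalRange_inducedRestrict (hW : ∀ M ∈ V, ∀ x ∈ W, M x ∈ W) (x : W) :
    finrank K (evalRange (inducedRestrict V W) x) = finrank K (evalRange V x) := by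
  rw [← map_subtype_evalRange_inducedRestrict hW, Submodule.finrank_map_subtype_eq]

theorem exists_finrank_evalRange_le_one_of_invariant [FiniteDimensional K E]
    (hV : IsNilSubspace V) (hW : ∀ M ∈ V, ∀ x ∈ W, M x ∈ W) (hW3 : finrank K W = 3) {u : E}
    (hu : u ∈ W) (hVu : 2 ≤ finrank K (evalRange V u)) {N : End K E} (hN : N ∈ V) (hNu : N u = 0)
    {y : E} (hy : y ∈ W) (hNy : N y ≠ 0) : ∃ x ≠ 0, finrank K (evalRange V x) ≤ 1 := by
  have hV' := hV.inducedRestrict W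
  have hbound := hV'.finrank_le
  have hsplit := finrank_evalRange_add_finrank_evalKer (inducedRestrict V W) (⟨u, hu⟩ : W)
  rw [finrank_evalRange_inducedRestrict hW] at hsplit
  replace hVu : 2 ≤ finrank K (evalRange V ((⟨u, hu⟩ : W) : E)) := hVu
  have hker : 1 ≤ finrank K (evalKer (inducedRestrict V W) (⟨u, hu⟩ : W)) := by
    refine Submodule.one_le_finrank_iff.2 <| (Submodule.ne_bot_iff _).2 ⟨N.restrict (hW N hN),
      mem_evalKer.2 ⟨restrict_mem_inducedRestrict hN _, Subtype.ext hNu⟩, fun h ↦ hNy ?_⟩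
    exact congr_arg Subtype.val (LinearMap.congr_fun h ⟨y, hy⟩)
  rw [hW3, show Nat.choose 3 2 = 3 from rfl] at hbound
  obtain ⟨x, hx, hVx⟩ := hV'.exists_finrank_evalRange_le_one hW3 (by omega)
  exact ⟨x, by simpa using hx, by rwa [finrank_evalRange_inducedRestrict hW] at hVx⟩

end Restriction

section Lift

variable {K E : Type*} [Field K] [AddCommGroup E] [Module K E]

/-- The endomorphism `x ⊗ f + u ⊗ ψ` belongs to `V` and kills `u`; it lifts the rank one
endomorphism `x ⊗ f` of `E / K u`. -/
structure IsLift (V : Submodule K (End K E)) (u x : E) (f ψ : Dual K E) : Prop where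
  apply_eq_zero : f u = 0
  correction_apply_eq_zero : ψ u = 0
  mem : f.smulRight x + ψ.smulRight u ∈ V

namespace IsLift

variable {V : Submodule K (End K E)} {M : End K E} {u x y z : E} {f g ψ χ ψ' : Dual K E}

theorem zero (V : Submodule K (End K E)) (u x : E) : IsLift V u x 0 0 :=
  ⟨rfl, rfl, by simp⟩

theorem sub_smul (h : IsLift V u x f ψ) (h' : IsLift V u x g χ) (a : K) :
    IsLift V u x (f - a • g) (ψ - a • χ) where
  apply_eq_zero := by simp [h.apply_eq_zero, h'.apply_eq_zero]
  correction_apply_eq_zero := by simp [h.correction_apply_eq_zero, h'.correction_apply_eq_zero]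
  mem := by
    convert V.sub_mem h.mem (V.smul_mem a h'.mem) using 1
    ext z
    simp only [LinearMap.add_apply, LinearMap.sub_apply, LinearMap.smul_apply,
      LinearMap.smulRight_apply, smul_eq_mul]
    module

theorem mem_spanEvalRange_of_apply_eq_one [FiniteDimensional K E] (h : IsLift V u x f ψ)
    (hV : IsMaxNilSubspace V) (hu : u ≠ 0) (hy : y ∈ spanEvalRange V u) (hfy : f y = 1) :
    x ∈ spanEvalRange V u := by
  have hmem := hV.apply_mem_spanEvalRange_of_mem hu h.mem
    (by simp [h.apply_eq_zero, h.correction_apply_eq_zero]) hy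
  have hu' : ψ y • u ∈ spanEvalRange V u :=
    Submodule.smul_mem _ _ (self_mem_spanEvalRange V u)
  simpa [hfy, Submodule.add_mem_iff_left _ hu'] using hmem

theorem smulRight_add_smul_mem [FiniteDimensional K E] (h : IsLift V u x f ψ)
    (hV : IsMaxNilSubspace V) (hu : u ≠ 0) {c : K}
    (hψ : ∀ y ∈ spanEvalRange V u, ψ y = c * f y) : f.smulRight (x + c • u) ∈ V := by
  have hcorr : (ψ - c • f).smulRight u ∈ V :=
    hV.smulRight_mem hu (by simp [h.apply_eq_zero, h.correction_apply_eq_zero])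
      fun M hM ↦ by simp [hψ _ (apply_mem_spanEvalRange hM u)]
  convert V.sub_mem h.mem hcorr using 1
  ext z
  simp only [LinearMap.add_apply, LinearMap.sub_apply, LinearMap.smul_apply,
    LinearMap.smulRight_apply, smul_eq_mul]
  module

theorem anticommutator_eq (h : IsLift V u x f ψ) (h' : IsLift V u y g χ) (hgx : g x = 0) :
    (f.smulRight x + ψ.smulRight u) * (g.smulRight y + χ.smulRight u) +
        (g.smulRight y + χ.smulRight u) * (f.smulRight x + ψ.smulRight u) =
      (f y • g).smulRight x + (ψ y • g + χ x • f).smulRight u := by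
  ext z
  simp only [LinearMap.add_apply, Module.End.mul_apply, LinearMap.smulRight_apply, map_add,
    map_smul, LinearMap.smul_apply, smul_eq_mul, h.apply_eq_zero, h.correction_apply_eq_zero,
    h'.apply_eq_zero, h'.correction_apply_eq_zero, hgx]
  module

variable [FiniteDimensional K E]

theorem apply_add_apply_eq_zero (h : IsLift V u x f ψ) (hV : IsNilSubspace V) (hM : M ∈ V) :
    f (M x) + ψ (M u) = 0 := by
  simpa only [mul_add, map_add, trace_mul_smulRight] using hV.trace_mul hM h.mem

/-- The anticommutator of the two lifts is again orthogonal to `V` for the trace form, although it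
need not belong to `V`. -/
theorem correction_apply_eq (h : IsLift V u x f ψ) (h' : IsLift V u y g χ) (hgx : g x = 0)
    (h'' : IsLift V u x (f y • g) ψ') (hV : IsNilSubspace V) (hz : z ∈ spanEvalRange V u) :
    ψ' z = ψ y * g z + χ x * f z := by
  obtain ⟨a, M, hM, rfl⟩ := mem_spanEvalRange.1 hz
  have htrace := hV.trace_anticommutator_mul h.mem h'.mem hM
  rw [h.anticommutator_eq h' hgx, LinearMap.trace_mul_comm, mul_add, map_add,
    trace_mul_smulRight, trace_mul_smulRight] at htrace
  have hM'' := h''.apply_add_apply_eq_zero hV hM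
  simp only [LinearMap.add_apply, LinearMap.smul_apply, smul_eq_mul, map_add, map_smul,
    h.apply_eq_zero, h'.apply_eq_zero, h''.correction_apply_eq_zero] at htrace hM'' ⊢
  linear_combination hM'' - htrace

end IsLift

end Lift

section PartialFlag

variable {K E : Type*} [Field K] [AddCommGroup E] [Module K E]

theorem apply_eq_zero_of_mem_dualAnnihilator_span {ι : Type*} {v : ι → E} {f : Dual K E}
    (hf : f ∈ (Submodule.span K (Set.range v)).dualAnnihilator) (i : ι) : f (v i) = 0 :=
  (Submodule.mem_dualAnnihilator f).1 hf _ (Submodule.subset_span ⟨i, rfl⟩)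

theorem span_range_vec_three_le {p : Submodule K E} {u e b : E} (hu : u ∈ p) (he : e ∈ p)
    (hb : b ∈ p) : Submodule.span K (Set.range ![u, e, b]) ≤ p := by
  rw [Submodule.span_le, Set.range_subset_iff]
  intro i
  fin_cases i
  exacts [hu, he, hb]

theorem exists_apply_eq_zero_apply_ne_zero [FiniteDimensional K E] {V : Submodule K (End K E)}
    {u w : E} (h : finrank K (evalRange V w) ≤ finrank K (evalRange V u)) {T : End K E}
    (hT : T ∈ V) (hTu : T u = 0) (hTw : T w ≠ 0) : ∃ Z ∈ V, Z w = 0 ∧ Z u ≠ 0 := by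
  by_contra! hle
  have hu := finrank_evalRange_add_finrank_evalKer V u
  have hw := finrank_evalRange_add_finrank_evalKer V w
  have heq : evalKer V w = evalKer V u :=
    Submodule.eq_of_le_of_finrank_le (fun Z hZ ↦ ⟨hZ.1, hle Z hZ.1 hZ.2⟩) (by omega)
  exact hTw (mem_evalKer.1 (heq ▸ mem_evalKer.2 ⟨hT, hTu⟩)).2

theorem IsNilSubspace.apply_notMem_span_pair {V : Submodule K (End K E)} (hV : IsNilSubspace V)
    {u e : E} (hu : u ≠ 0) {T Z : End K E} {c τ : K} (hT : T ∈ V) (hTu : T u = 0)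
    (hTw : T (e + c • u) = τ • u) (hτ : τ ≠ 0) (hZ : Z ∈ V) (hZw : Z (e + c • u) = 0)
    (hZu : Z u ≠ 0) : Z u ∉ Submodule.span K (Set.range ![u, e]) := by
  intro hmem
  rw [Matrix.range_cons_cons_empty, Submodule.mem_span_pair] at hmem
  obtain ⟨α, β, hαβ⟩ := hmem
  replace hαβ : Z u = (α - β * c) • u + β • (e + c • u) := by rw [← hαβ]; module
  have hα : α - β * c = 0 :=
    eq_zero_of_apply_eq_smul (hV Z hZ) hZu <| by
      conv_lhs => rw [hαβ, map_add, map_smul, map_smul, hZw, smul_zero, add_zero]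
  rw [hα, zero_smul, zero_add] at hαβ
  have hsq : (Z + T) ((Z + T) u) = (β * τ) • u := by
    simp only [LinearMap.add_apply, hTu, add_zero, hαβ, map_smul, hZw, hTw]
    module
  have hzero := apply_apply_eq_zero_of_eq_add (hV _ (V.add_mem hZ hT))
    (a := β * τ) (b := 0) (by rw [hsq, zero_smul, add_zero])
  rw [hsq, smul_eq_zero_iff_left hu, mul_eq_zero, or_iff_left hτ] at hzero
  exact hZu (by rw [hαβ, hzero, zero_smul])

/-- The vectors `u`, `e`, `b` begin a flag of `E` such that `V` contains lifts of every `e ⊗ f` with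
`f` vanishing on `u`, `e` and of every `b ⊗ g` with `g` vanishing on `u`, `e`, `b`. The form `φ` is
dual to `b`, and `e ⊗ φ + u ⊗ ψ` is a chosen lift of `e ⊗ φ`. -/
structure PartialFlag (V : Submodule K (End K E)) (u e b : E) (φ ψ : Dual K E) : Prop where
  linearIndependent : LinearIndependent K ![u, e, b]
  isLift : IsLift V u e φ ψ
  apply_fst : φ e = 0
  apply_snd : φ b = 1
  exists_isLift_fst (f : Dual K E) : f u = 0 → f e = 0 → ∃ ψ', IsLift V u e f ψ'
  exists_isLift_snd (g : Dual K E) : g u = 0 → g e = 0 → g b = 0 → ∃ χ, IsLift V u b g χ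

namespace PartialFlag

variable {V : Submodule K (End K E)} {M : End K E} {u e b x y : E} {φ ψ f g χ : Dual K E}

theorem ne_zero (h : PartialFlag V u e b φ ψ) : u ≠ 0 :=
  h.linearIndependent.ne_zero 0

theorem add_smul_ne_zero (h : PartialFlag V u e b φ ψ) (c : K) : e + c • u ≠ 0 := by
  intro h0
  have := Fintype.linearIndependent_iff.1 h.linearIndependent ![c, 1, 0]
    (by simpa [Fin.sum_univ_three, add_comm] using h0) 1
  simp at this

theorem mem_span_pair (h : PartialFlag V u e b φ ψ) (hφ : φ x = 0)
    (hx : ∀ g : Dual K E, g u = 0 → g e = 0 → g b = 0 → g x = 0) :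
    x ∈ Submodule.span K (Set.range ![u, e]) := by
  refine (Subspace.forall_mem_dualAnnihilator_apply_eq_zero_iff _ _).1 fun f hf ↦ ?_
  have hfu : f u = 0 := apply_eq_zero_of_mem_dualAnnihilator_span hf 0
  have hfe : f e = 0 := apply_eq_zero_of_mem_dualAnnihilator_span hf 1
  simpa [hφ] using hx (f - f b • φ) (by simp [hfu, h.isLift.apply_eq_zero])
    (by simp [hfe, h.apply_fst]) (by simp [h.apply_snd])

variable [FiniteDimensional K E]

theorem fst_mem (h : PartialFlag V u e b φ ψ) (hV : IsMaxNilSubspace V)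
    (hVu : 2 ≤ finrank K (evalRange V u)) : e ∈ spanEvalRange V u := by
  obtain ⟨x, hx, hxe⟩ : ∃ x ∈ spanEvalRange V u, x ∉ Submodule.span K (Set.range ![u, e]) := by
    by_contra! hle
    have hcard : finrank K (Submodule.span K (Set.range ![u, e])) ≤ 2 :=
      finrank_range_le_card (R := K) ![u, e]
    have := Submodule.finrank_mono hle
    rw [hV.isNilSubspace.finrank_spanEvalRange h.ne_zero] at this
    omega
  obtain ⟨f, hfx, hf⟩ := exists_dual_eq_one_of_notMem hxe
  obtain ⟨ψ', hlift⟩ := h.exists_isLift_fst f (hf _ (Submodule.subset_span ⟨0, rfl⟩))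
    (hf _ (Submodule.subset_span ⟨1, rfl⟩))
  exact hlift.mem_spanEvalRange_of_apply_eq_one hV h.ne_zero hx hfx

theorem snd_mem (h : PartialFlag V u e b φ ψ) (hV : IsMaxNilSubspace V)
    (hVu : 2 ≤ finrank K (evalRange V u)) : b ∈ spanEvalRange V u := by
  by_cases hle : spanEvalRange V u ≤ Submodule.span K (Set.range ![u, e, b])
  · have hcard : finrank K (Submodule.span K (Set.range ![u, e, b])) ≤ 3 :=
      finrank_range_le_card (R := K) ![u, e, b]
    rw [Submodule.eq_of_le_of_finrank_le hle
      (by rw [hV.isNilSubspace.finrank_spanEvalRange h.ne_zero]; omega)]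
    exact Submodule.subset_span ⟨2, rfl⟩
  obtain ⟨x, hx, hxb⟩ := SetLike.not_le_iff_exists.1 hle
  obtain ⟨g, hgx, hg⟩ := exists_dual_eq_one_of_notMem hxb
  obtain ⟨χ, hlift⟩ := h.exists_isLift_snd g (hg _ (Submodule.subset_span ⟨0, rfl⟩))
    (hg _ (Submodule.subset_span ⟨1, rfl⟩)) (hg _ (Submodule.subset_span ⟨2, rfl⟩))
  exact hlift.mem_spanEvalRange_of_apply_eq_one hV h.ne_zero hx hgx

theorem correction_apply_eq (h : PartialFlag V u e b φ ψ) (hV : IsNilSubspace V)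
    (hg : IsLift V u b g χ) (hge : g e = 0) {ψ' : Dual K E} (hψ' : IsLift V u e g ψ')
    (hx : x ∈ spanEvalRange V u) : ψ' x = ψ b * g x + χ e * φ x :=
  h.isLift.correction_apply_eq hg hge (by rwa [h.apply_snd, one_smul]) hV hx

theorem smulRight_mem_of_correction_apply_eq_zero (h : PartialFlag V u e b φ ψ)
    (hV : IsMaxNilSubspace V) (hg : IsLift V u b g χ) (hge : g e = 0) (hχ : χ e = 0) :
    g.smulRight (e + ψ b • u) ∈ V := by
  obtain ⟨ψ', hψ'⟩ := h.exists_isLift_fst g hg.apply_eq_zero hge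
  refine hψ'.smulRight_add_smul_mem hV h.ne_zero fun x hx ↦ ?_
  rw [h.correction_apply_eq hV.isNilSubspace hg hge hψ' hx, hχ, zero_mul, add_zero]

theorem exists_apply_eq_mul (h : PartialFlag V u e b φ ψ) (hV : IsNilSubspace V)
    (hg : IsLift V u b g χ) (hge : g e = 0) (hχ : χ e ≠ 0) (hfu : f u = 0) (hfe : f e = 0)
    (hfb : f b = 0) : ∃ k : K, ∀ x ∈ spanEvalRange V u, f x = k * g x := by
  obtain ⟨ψ', hf⟩ := h.exists_isLift_fst f hfu hfe
  refine ⟨-ψ' b / χ e, fun x hx ↦ ?_⟩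
  have hx' := hf.correction_apply_eq hg hge
    (by rw [hfb, zero_smul]; exact IsLift.zero V u e) hV hx
  rw [LinearMap.zero_apply] at hx'
  field_simp
  linear_combination -hx'

theorem correction_apply_fst_eq_zero_of_exists_ne_zero (h : PartialFlag V u e b φ ψ)
    (hV : IsNilSubspace V) (hg : IsLift V u b g χ) (hge : g e = 0) (he : e ∈ spanEvalRange V u)
    (hx : x ∈ spanEvalRange V u) (hgx : g x ≠ 0) : ψ e = 0 := by
  obtain ⟨ψ', hψ'⟩ := h.exists_isLift_fst g hg.apply_eq_zero hge
  have hψ'e := h.correction_apply_eq hV hg hge hψ' he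
  have hx' := h.isLift.correction_apply_eq hψ' hge
    (by rw [h.apply_fst, zero_smul]; exact IsLift.zero V u e) hV hx
  rw [hψ'e, hge, h.apply_fst, mul_zero, mul_zero, add_zero, zero_mul, add_zero,
    LinearMap.zero_apply, eq_comm] at hx'
  exact (mul_eq_zero.1 hx').resolve_right hgx

/-- If `g` vanishes on `K u + V u` then `u ⊗ g ∈ V`, so that `g (M ^ 3 u) = 0` for the `M ∈ V` with
`M u = e - k u`. -/
theorem correction_apply_fst_eq_zero_of_forall_eq_zero (h : PartialFlag V u e b φ ψ)
    (hV : IsMaxNilSubspace V) (hg : IsLift V u b g χ) (hge : g e = 0)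
    (hχ : χ e ≠ 0) (he : e ∈ spanEvalRange V u) (hgW : ∀ x ∈ spanEvalRange V u, g x = 0) :
    ψ e = 0 := by
  obtain ⟨k, M, hM, hMu⟩ := mem_spanEvalRange.1 he
  have hMu' : M u = e - k • u := by rw [hMu, add_sub_cancel_left]
  have hMe : M e ∈ spanEvalRange V u := by
    rw [hMu, map_add, map_smul]
    exact add_mem (Submodule.smul_mem _ _ (apply_mem_spanEvalRange hM u))
      (hV.apply_apply_mem_spanEvalRange h.ne_zero hM)
  have hφMe := h.isLift.apply_add_apply_eq_zero hV.isNilSubspace hM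
  have hgMb := hg.apply_add_apply_eq_zero hV.isNilSubspace hM
  simp only [hMu', map_sub, map_smul, h.isLift.correction_apply_eq_zero,
    hg.correction_apply_eq_zero, smul_zero, sub_zero] at hφMe hgMb
  have hgMMe : g (M (M e)) = -χ e * φ (M e) := by
    obtain ⟨a, ha⟩ := h.exists_apply_eq_mul (f := g ∘ₗ M + χ e • φ) hV.isNilSubspace hg hge hχ
      (by simp [h.isLift.apply_eq_zero, hgW _ (apply_mem_spanEvalRange hM u)])
      (by simp [h.apply_fst, hgW _ hMe]) (by simp [h.apply_snd, hgMb])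
    have := ha _ hMe
    simp only [LinearMap.add_apply, LinearMap.comp_apply, LinearMap.smul_apply, smul_eq_mul,
      hgW _ hMe] at this
    linear_combination this
  have hgM3 : g ((M ^ 3) u) = 0 :=
    hV.isNilSubspace.apply_pow_eq_zero (hV.smulRight_mem h.ne_zero hg.apply_eq_zero
      fun N hN ↦ hgW _ (apply_mem_spanEvalRange hN u)) hM 3
  simp only [pow_succ, pow_zero, one_mul, Module.End.mul_apply, hMu', map_sub, map_smul,
    hgMMe, hgW _ hMe, hge, hg.apply_eq_zero, smul_zero, sub_zero] at hgM3
  rwa [(mul_eq_zero.1 hgM3).resolve_left (neg_ne_zero.2 hχ), zero_add] at hφMe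

theorem correction_apply_fst_eq_zero (h : PartialFlag V u e b φ ψ) (hV : IsMaxNilSubspace V)
    (hg : IsLift V u b g χ) (hge : g e = 0) (hχ : χ e ≠ 0)
    (he : e ∈ spanEvalRange V u) : ψ e = 0 := by
  by_cases hgW : ∀ x ∈ spanEvalRange V u, g x = 0
  · exact h.correction_apply_fst_eq_zero_of_forall_eq_zero hV hg hge hχ he hgW
  · push Not at hgW
    obtain ⟨x, hx, hgx⟩ := hgW
    exact h.correction_apply_fst_eq_zero_of_exists_ne_zero hV.isNilSubspace hg hge he hx hgx

theorem mem_rankOneForms_sup_span (h : PartialFlag V u e b φ ψ) (hV : IsMaxNilSubspace V)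
    (hg : IsLift V u b g χ) (hge : g e = 0) (hχ : χ e ≠ 0) (hfu : f u = 0) (hfe : f e = 0)
    (hfb : f b = 0) : f ∈ rankOneForms V (e + ψ b • u) ⊔ K ∙ g := by
  obtain ⟨χ', hf⟩ := h.exists_isLift_snd f hfu hfe hfb
  rw [← sub_add_cancel f ((χ' e / χ e) • g)]
  refine Submodule.add_mem_sup (mem_rankOneForms.2 ?_)
    (Submodule.smul_mem _ _ (Submodule.mem_span_singleton_self g))
  exact h.smulRight_mem_of_correction_apply_eq_zero hV (hf.sub_smul hg (χ' e / χ e))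
    (by simp [hfe, hge]) (by simp [hχ])

theorem finrank_evalRange_le_three (h : PartialFlag V u e b φ ψ) (hV : IsMaxNilSubspace V)
    (hg : IsLift V u b g χ) (hge : g e = 0) (hχ : χ e ≠ 0) :
    finrank K (evalRange V (e + ψ b • u)) ≤ 3 := by
  have hlt := hV.isNilSubspace.finrank_evalRange_lt_of_dualAnnihilator_le
    (h.add_smul_ne_zero (ψ b)) (U := Submodule.span K (Set.range ![u, e, b])) (F := K ∙ g)
    fun f hf ↦ h.mem_rankOneForms_sup_span hV hg hge hχ
      (apply_eq_zero_of_mem_dualAnnihilator_span hf 0)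
      (apply_eq_zero_of_mem_dualAnnihilator_span hf 1)
      (apply_eq_zero_of_mem_dualAnnihilator_span hf 2)
  have hU : finrank K (Submodule.span K (Set.range ![u, e, b])) ≤ 3 :=
    finrank_range_le_card (R := K) ![u, e, b]
  have hF : finrank K (K ∙ g) ≤ 1 := (finrank_span_le_card {g}).trans (by simp)
  omega

theorem finrank_evalRange_le_two (h : PartialFlag V u e b φ ψ) (hV : IsMaxNilSubspace V)
    (hg : IsLift V u b g χ) (hge : g e = 0) (hχ : χ e ≠ 0)
    (hψ : ∀ x ∈ spanEvalRange V u, ψ x = ψ b * φ x) :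
    finrank K (evalRange V (e + ψ b • u)) ≤ 2 := by
  have hlt := hV.isNilSubspace.finrank_evalRange_lt_of_dualAnnihilator_le
    (h.add_smul_ne_zero (ψ b)) (U := Submodule.span K (Set.range ![u, e])) (F := K ∙ g)
    fun f hf ↦ by
      have hfu : f u = 0 := apply_eq_zero_of_mem_dualAnnihilator_span hf 0
      have hfe : f e = 0 := apply_eq_zero_of_mem_dualAnnihilator_span hf 1
      rw [← sub_add_cancel f (f b • φ)]
      exact add_mem (h.mem_rankOneForms_sup_span hV hg hge hχ
        (by simp [hfu, h.isLift.apply_eq_zero]) (by simp [hfe, h.apply_fst])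
        (by simp [h.apply_snd])) (Submodule.smul_mem _ _ <| Submodule.mem_sup_left <|
          mem_rankOneForms.2 <| h.isLift.smulRight_add_smul_mem hV h.ne_zero hψ)
  have hU : finrank K (Submodule.span K (Set.range ![u, e])) ≤ 2 :=
    finrank_range_le_card (R := K) ![u, e]
  have hF : finrank K (K ∙ g) ≤ 1 := (finrank_span_le_card {g}).trans (by simp)
  omega

/-- As `b ⊗ g + u ⊗ χ` kills `u` but not `w = e + ψ b • u`, a dimension count yields `Z ∈ V` killing
`w` but not `u`; the vector `Z u` is the required one. -/
theorem exists_apply_ne_zero_of_finrank_le (h : PartialFlag V u e b φ ψ) (hV : IsMaxNilSubspace V)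
    (hg : IsLift V u b g χ) (hge : g e = 0) (hχ : χ e ≠ 0)
    (hle : finrank K (evalRange V (e + ψ b • u)) ≤ finrank K (evalRange V u)) :
    ∃ y ∈ spanEvalRange V u, g y ≠ 0 ∧ φ y = 0 ∧ ψ y = 0 := by
  have hTu : (g.smulRight b + χ.smulRight u) u = 0 := by
    simp [hg.apply_eq_zero, hg.correction_apply_eq_zero]
  have hTw : (g.smulRight b + χ.smulRight u) (e + ψ b • u) = χ e • u := by
    simp [hge, hg.apply_eq_zero, hg.correction_apply_eq_zero]
  obtain ⟨Z, hZ, hZw, hZu⟩ := exists_apply_eq_zero_apply_ne_zero hle hg.mem hTu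
    (by rw [hTw]; exact smul_ne_zero hχ h.ne_zero)
  have hy := apply_mem_spanEvalRange hZ u
  have hZe : Z e = -(ψ b • Z u) := by
    rwa [map_add, map_smul, add_eq_zero_iff_eq_neg] at hZw
  obtain ⟨ψ', hψ'⟩ := h.exists_isLift_fst g hg.apply_eq_zero hge
  have hgψ' := hψ'.apply_add_apply_eq_zero hV.isNilSubspace hZ
  have hφψ := h.isLift.apply_add_apply_eq_zero hV.isNilSubspace hZ
  simp only [hZe, map_neg, map_smul, smul_eq_mul,
    h.correction_apply_eq hV.isNilSubspace hg hge hψ' hy] at hgψ' hφψ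
  have hφy : φ (Z u) = 0 := by
    have : χ e * φ (Z u) = 0 := by linear_combination hgψ'
    exact (mul_eq_zero.1 this).resolve_left hχ
  refine ⟨Z u, hy, fun hgy ↦ ?_, hφy, by linear_combination hφψ + ψ b * hφy⟩
  refine hV.isNilSubspace.apply_notMem_span_pair h.ne_zero hg.mem hTu hTw hχ hZ hZw hZu
    (h.mem_span_pair hφy fun f hfu hfe hfb ↦ ?_)
  obtain ⟨k, hk⟩ := h.exists_apply_eq_mul hV.isNilSubspace hg hge hχ hfu hfe hfb
  rw [hk _ hy, hgy, mul_zero]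

theorem three_le_finrank_evalRange (h : PartialFlag V u e b φ ψ) (hV : IsMaxNilSubspace V)
    (hVu : 2 ≤ finrank K (evalRange V u)) (hgu : g u = 0) (hge : g e = 0) (hgb : g b = 0)
    (hx : x ∈ spanEvalRange V u) (hgx : g x ≠ 0) : 3 ≤ finrank K (evalRange V u) := by
  have hle : Submodule.span K (Set.range ![u, e, b]) ≤ spanEvalRange V u ⊓ LinearMap.ker g :=
    span_range_vec_three_le ⟨self_mem_spanEvalRange V u, hgu⟩ ⟨h.fst_mem hV hVu, hge⟩
      ⟨h.snd_mem hV hVu, hgb⟩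
  have hlt : spanEvalRange V u ⊓ LinearMap.ker g < spanEvalRange V u :=
    inf_lt_left.2 fun hker ↦ hgx (hker hx)
  have hfinrank := Submodule.finrank_lt_finrank_of_lt (hle.trans_lt hlt)
  rw [finrank_span_eq_card h.linearIndependent, Fintype.card_fin,
    hV.isNilSubspace.finrank_spanEvalRange h.ne_zero] at hfinrank
  omega

theorem finrank_evalRange_add_smul_lt (h : PartialFlag V u e b φ ψ) (hV : IsMaxNilSubspace V)
    (hVu : 2 ≤ finrank K (evalRange V u)) (hg : IsLift V u b g χ) (hge : g e = 0) (hgb : g b = 0)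
    (hχ : χ e ≠ 0) :
    finrank K (evalRange V (e + ψ b • u)) < finrank K (evalRange V u) := by
  have hψe := h.correction_apply_fst_eq_zero hV hg hge hχ (h.fst_mem hV hVu)
  obtain ⟨k, hk⟩ := h.exists_apply_eq_mul (f := ψ - ψ b • φ) hV.isNilSubspace hg hge hχ
    (by simp [h.isLift.apply_eq_zero, h.isLift.correction_apply_eq_zero])
    (by simp [hψe, h.apply_fst]) (by simp [h.apply_snd])
  replace hk {x} (hx : x ∈ spanEvalRange V u) : ψ x = k * g x + ψ b * φ x := by
    simpa [sub_eq_iff_eq_add] using hk x hx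
  have hthree {x} (hx : x ∈ spanEvalRange V u) (hgx : g x ≠ 0) :=
    h.three_le_finrank_evalRange hV hVu hg.apply_eq_zero hge hgb hx hgx
  by_contra! hlt
  obtain ⟨y, hy, hgy, hφy, hψy⟩ := h.exists_apply_ne_zero_of_finrank_le hV hg hge hχ <| by
    by_cases hgW : ∃ x ∈ spanEvalRange V u, g x ≠ 0
    · obtain ⟨x, hx, hgx⟩ := hgW
      exact (h.finrank_evalRange_le_three hV hg hge hχ).trans (hthree hx hgx)
    · push Not at hgW
      exact (h.finrank_evalRange_le_two hV hg hge hχ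
        fun x hx ↦ by rw [hk hx, hgW x hx, mul_zero, zero_add]).trans hVu
  have hk0 : k = 0 := by simpa [hφy, hψy, hgy] using hk hy
  have htwo := h.finrank_evalRange_le_two hV hg hge hχ fun x hx ↦ by
    rw [hk hx, hk0, zero_mul, zero_add]
  have := hthree hy hgy
  omega

theorem apply_fst_mem (h : PartialFlag V u e b φ ψ) (hV : IsMaxNilSubspace V)
    (hVu : 2 ≤ finrank K (evalRange V u))
    (hχ : ∀ g χ, IsLift V u b g χ → g e = 0 → g b = 0 → χ e = 0) (hM : M ∈ V) :
    M e ∈ spanEvalRange V u := by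
  refine hV.mem_spanEvalRange_of_forall h.ne_zero fun g hg ↦ ?_
  have hgW := (Submodule.mem_dualAnnihilator g).1 (hV.isNilSubspace.rankOneForms_le u hg)
  have hgu := hgW u (self_mem_spanEvalRange V u)
  have hge := hgW e (h.fst_mem hV hVu)
  have hgb := hgW b (h.snd_mem hV hVu)
  obtain ⟨χ, hlift⟩ := h.exists_isLift_snd g hgu hge hgb
  obtain ⟨ψ', hψ'⟩ := h.exists_isLift_fst g hgu hge
  have hMu := apply_mem_spanEvalRange hM u
  simpa [h.correction_apply_eq hV.isNilSubspace hlift hge hψ' hMu, hχ g χ hlift hge hgb,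
    hgW _ hMu] using hψ'.apply_add_apply_eq_zero hV.isNilSubspace hM

theorem apply_mem_of_spanEvalRange_le (h : PartialFlag V u e b φ ψ) (hV : IsMaxNilSubspace V)
    (hVu : 2 ≤ finrank K (evalRange V u))
    (hχ : ∀ g χ, IsLift V u b g χ → g e = 0 → g b = 0 → χ e = 0)
    (hW : spanEvalRange V u ≤ Submodule.span K (Set.range ![u, e, b])) (hM : M ∈ V)
    (hx : x ∈ spanEvalRange V u) : M x ∈ spanEvalRange V u := by
  have hpreserve {N : End K E} (hN : N ∈ V) (hNb : N b ∈ spanEvalRange V u) {z : E}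
      (hz : z ∈ spanEvalRange V u) : N z ∈ spanEvalRange V u := by
    suffices hle : Submodule.span K (Set.range ![u, e, b]) ≤ (spanEvalRange V u).comap N from
      hle (hW hz)
    exact span_range_vec_three_le (p := (spanEvalRange V u).comap N)
      (apply_mem_spanEvalRange hN u) (h.apply_fst_mem hV hVu hχ hN) hNb
  obtain ⟨k, Y, hY, hYu⟩ := mem_spanEvalRange.1 (h.snd_mem hV hVu)
  have hYW {z : E} (hz : z ∈ spanEvalRange V u) : Y z ∈ spanEvalRange V u := by
    refine hpreserve hY ?_ hz
    rw [hYu, map_add, map_smul]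
    exact add_mem (Submodule.smul_mem _ _ (apply_mem_spanEvalRange hY u))
      (hV.apply_apply_mem_spanEvalRange h.ne_zero hY)
  refine hpreserve hM ?_ hx
  have hMu := apply_mem_spanEvalRange hM u
  rw [hYu, map_add, map_smul]
  exact add_mem (Submodule.smul_mem _ _ hMu) <| (Submodule.add_mem_iff_left _ (hYW hMu)).1
    (hV.anticommutator_apply_mem_spanEvalRange h.ne_zero hM hY)

/-- Unless `e + ψ b • u` has the required property, `K u + V u` is a `V`-invariant subspace of
dimension three. -/
theorem exists_finrank_evalRange_lt_of_correction_apply_eq_zero (h : PartialFlag V u e b φ ψ)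
    (hV : IsMaxNilSubspace V) (hVu : 2 ≤ finrank K (evalRange V u))
    (hχ : ∀ g χ, IsLift V u b g χ → g e = 0 → g b = 0 → χ e = 0) :
    ∃ x ≠ 0, finrank K (evalRange V x) < finrank K (evalRange V u) := by
  by_contra! hmin
  have hw := h.add_smul_ne_zero (ψ b)
  have hdim := hV.isNilSubspace.finrank_spanEvalRange h.ne_zero
  have hspan : finrank K (Submodule.span K (Set.range ![u, e, b])) = 3 :=
    finrank_span_eq_card h.linearIndependent
  have hlt := hV.isNilSubspace.finrank_evalRange_lt_of_dualAnnihilator_le hw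
    (U := Submodule.span K (Set.range ![u, e, b])) (F := ⊥) fun g hg ↦ by
      have hge : g e = 0 := apply_eq_zero_of_mem_dualAnnihilator_span hg 1
      have hgb : g b = 0 := apply_eq_zero_of_mem_dualAnnihilator_span hg 2
      obtain ⟨χ, hlift⟩ :=
        h.exists_isLift_snd g (apply_eq_zero_of_mem_dualAnnihilator_span hg 0) hge hgb
      exact Submodule.mem_sup_left <|
        h.smulRight_mem_of_correction_apply_eq_zero hV hlift hge (hχ g χ hlift hge hgb)
  rw [hspan, finrank_bot] at hlt
  have hwu := hmin _ hw
  have hW : Submodule.span K (Set.range ![u, e, b]) = spanEvalRange V u := by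
    refine Submodule.eq_of_le_of_finrank_le (span_range_vec_three_le ?_ ?_ ?_) (by omega)
    exacts [self_mem_spanEvalRange V u, h.fst_mem hV hVu, h.snd_mem hV hVu]
  obtain ⟨x, hx, hVx⟩ := exists_finrank_evalRange_le_one_of_invariant hV.isNilSubspace
    (fun M hM x ↦ h.apply_mem_of_spanEvalRange_le hV hVu hχ hW.ge hM) (hW ▸ hspan)
    (self_mem_spanEvalRange V u) hVu h.isLift.mem
    (by simp [h.isLift.apply_eq_zero, h.isLift.correction_apply_eq_zero]) (h.snd_mem hV hVu)
    (by simpa [h.apply_snd] using hw)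
  have := hmin x hx
  omega

theorem exists_finrank_evalRange_lt (h : PartialFlag V u e b φ ψ) (hV : IsMaxNilSubspace V)
    (hVu : 2 ≤ finrank K (evalRange V u)) :
    ∃ x ≠ 0, finrank K (evalRange V x) < finrank K (evalRange V u) := by
  by_cases hχ : ∀ g χ, IsLift V u b g χ → g e = 0 → g b = 0 → χ e = 0
  · exact h.exists_finrank_evalRange_lt_of_correction_apply_eq_zero hV hVu hχ
  · push Not at hχ
    obtain ⟨g, χ, hg, hge, hgb, hχ⟩ := hχ
    exact ⟨_, h.add_smul_ne_zero _, h.finrank_evalRange_add_smul_lt hV hVu hg hge hgb hχ⟩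

end PartialFlag

end PartialFlag

section StrictUpper

variable {K E : Type*} [Field K] [AddCommGroup E] [Module K E] {n : ℕ}

/-- The space of endomorphisms whose matrix with respect to `b` is strictly upper triangular. -/
def strictUpper (b : Basis (Fin n) K E) : Submodule K (End K E) where
  carrier := {M | ∀ i j, j ≤ i → b.repr (M (b j)) i = 0}
  add_mem' hM hN i j hij := by simp [hM i j hij, hN i j hij]
  zero_mem' i j _ := by simp
  smul_mem' a M hM i j hij := by simp [hM i j hij]

theorem mem_strictUpper {b : Basis (Fin n) K E} {M : End K E} :
    M ∈ strictUpper b ↔ ∀ i j, j ≤ i → b.repr (M (b j)) i = 0 := Iff.rfl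

theorem isNilSubspace_strictUpper (b : Basis (Fin n) K E) : IsNilSubspace (strictUpper b) := by
  intro M hM
  have := Module.Finite.of_basis b
  have hentry (i j : Fin n) (hij : j ≤ i) : LinearMap.toMatrix b b M i j = 0 := by
    rw [LinearMap.toMatrix_apply, mem_strictUpper.1 hM i j hij]
  rw [LinearMap.isNilpotent_iff_charpoly, ← LinearMap.charpoly_toMatrix M b,
    Matrix.charpoly_of_isUpperTriangular _ fun i j hij ↦ hentry i j hij.le]
  simp [hentry, finrank_eq_card_basis b]

theorem smulRight_mem_strictUpper {b : Basis (Fin n) K E} {i : Fin n} {f : Dual K E}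
    (hf : ∀ j ≤ i, f (b j) = 0) : f.smulRight (b i) ∈ strictUpper b := by
  intro k j hjk
  rcases eq_or_ne k i with rfl | hki
  · simp [hf j hjk]
  · simp [Finsupp.single_eq_of_ne hki]

section QuotientBasis

variable {V : Submodule K (End K E)} {u : E} {c : Basis (Fin n) K (E ⧸ K ∙ u)}
  {b : Basis (Fin (n + 1)) K E}

theorem exists_basis_mkQ_succ_eq (hu : u ≠ 0) (c : Basis (Fin n) K (E ⧸ K ∙ u)) :
    ∃ b : Basis (Fin (n + 1)) K E, b 0 = u ∧ ∀ i, (K ∙ u).mkQ (b (Fin.succ i)) = c i := by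
  let bu := (Basis.singleton Unit K).map (LinearEquiv.toSpanNonzeroSingleton K E u hu)
  let e : Fin (n + 1) ≃ Unit ⊕ Fin n :=
    (finSuccEquiv n).trans ((Equiv.optionEquivSumPUnit _).trans (Equiv.sumComm _ _))
  exact ⟨(bu.sumQuot c).reindex e.symm, by simp [e, bu], fun i ↦ by simp [e]⟩

theorem repr_succ_eq_repr_mkQ (hb : b 0 = u) (hbc : ∀ i, (K ∙ u).mkQ (b (Fin.succ i)) = c i)
    (x : E) (i : Fin n) : b.repr x i.succ = c.repr ((K ∙ u).mkQ x) i := by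
  suffices h : b.coord i.succ = c.coord i ∘ₗ (K ∙ u).mkQ from LinearMap.congr_fun h x
  refine b.ext fun j ↦ ?_
  cases j using Fin.cases with
  | zero =>
    have hu : (K ∙ u).mkQ u = 0 := by simp
    rw [LinearMap.comp_apply, b.coord_apply, b.repr_self, hb, hu, map_zero,
      Finsupp.single_eq_of_ne (Fin.succ_ne_zero i)]
  | succ j => simp [hbc, Finsupp.single_apply, -Submodule.mkQ_apply]

theorem le_strictUpper_of_inducedQuotient_eq (hVu : evalRange V u = ⊥)
    (hVc : inducedQuotient V u = strictUpper c) (hb : b 0 = u)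
    (hbc : ∀ i, (K ∙ u).mkQ (b (Fin.succ i)) = c i) : V ≤ strictUpper b := by
  intro M hM i j hij
  have hMu : M u = 0 := (Submodule.mem_bot K).1 (hVu ▸ mem_evalRange.2 ⟨M, hM, rfl⟩)
  cases j using Fin.cases with
  | zero => simp [hb, hMu]
  | succ j =>
    obtain ⟨i, rfl⟩ := Fin.exists_succ_eq.2 ((Fin.succ_pos j).trans_le hij).ne'
    have hle : K ∙ u ≤ (K ∙ u).comap M := by
      rw [Submodule.span_singleton_le_iff_mem, Submodule.mem_comap, hMu]
      exact Submodule.zero_mem _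
    have hT : (K ∙ u).mapQ (K ∙ u) M hle ∈ strictUpper c :=
      hVc ▸ mem_inducedQuotient.2 ⟨M, hM, hMu, fun z ↦ rfl⟩
    have hTij := hT i j (Fin.succ_le_succ_iff.1 hij)
    rw [repr_succ_eq_repr_mkQ hb hbc]
    rwa [← hbc] at hTij

theorem exists_isLift_of_inducedQuotient_eq (hu : u ≠ 0)
    (hVc : inducedQuotient V u = strictUpper c) (hbc : ∀ i, (K ∙ u).mkQ (b (Fin.succ i)) = c i)
    {i : Fin n} {f : Dual K E} (hfu : f u = 0) (hf : ∀ j ≤ i, f (b j.succ) = 0) :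
    ∃ ψ, IsLift V u (b i.succ) f ψ := by
  have hle : K ∙ u ≤ LinearMap.ker f := by
    rwa [Submodule.span_singleton_le_iff_mem, LinearMap.mem_ker]
  have hmem : ((K ∙ u).liftQ f hle).smulRight (c i) ∈ inducedQuotient V u := by
    rw [hVc]
    refine smulRight_mem_strictUpper fun j hj ↦ ?_
    rw [← hbc, Submodule.mkQ_apply, Submodule.liftQ_apply, hf j hj]
  obtain ⟨M, hM, hMu, hMf⟩ := mem_inducedQuotient.1 hmem
  obtain ⟨ψ, hψ⟩ := exists_smulRight_eq_of_forall_mem_span (M := M - f.smulRight (b i.succ)) hu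
    fun z ↦ by
      rw [← Submodule.ker_mkQ (K ∙ u), LinearMap.mem_ker, LinearMap.sub_apply, map_sub, hMf]
      simp [← hbc]
  refine ⟨ψ, hfu, ?_, by rwa [hψ, add_sub_cancel]⟩
  simpa [hMu, hfu, hu] using LinearMap.congr_fun hψ u

end QuotientBasis

theorem exists_partialFlag {V : Submodule K (End K E)} {u : E} (hu : u ≠ 0)
    {c : Basis (Fin (n + 2)) K (E ⧸ K ∙ u)} (hVc : inducedQuotient V u = strictUpper c) :
    ∃ e b φ ψ, PartialFlag V u e b φ ψ := by
  obtain ⟨b, hb, hbc⟩ := exists_basis_mkQ_succ_eq hu c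
  have hlift_fst (f : Dual K E) (hfu : f u = 0) (hfe : f (b 1) = 0) : ∃ ψ, IsLift V u (b 1) f ψ :=
    exists_isLift_of_inducedQuotient_eq (i := 0) hu hVc hbc hfu fun j hj ↦ by
      rwa [Fin.le_zero_iff.1 hj]
  have hlift_snd (g : Dual K E) (hgu : g u = 0) (hge : g (b 1) = 0) (hgb : g (b 2) = 0) :
      ∃ χ, IsLift V u (b 2) g χ :=
    exists_isLift_of_inducedQuotient_eq (i := 1) hu hVc hbc hgu fun j hj ↦ by
      cases j using Fin.cases with
      | zero => exact hge
      | succ j => rwa [Fin.le_zero_iff.1 (Fin.succ_le_succ_iff.1 hj)]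
  have hinj : Function.Injective (Fin.castLE (Nat.le_add_left 3 n)) := Fin.castLE_injective _
  have hindep : LinearIndependent K ![u, b 1, b 2] := by
    convert b.linearIndependent.comp _ hinj using 1
    ext i
    fin_cases i
    exacts [hb.symm, rfl, rfl]
  have hφu : b.coord 2 u = 0 := by
    rw [← hb, b.coord_apply, b.repr_self]
    exact Finsupp.single_eq_of_ne (hinj.ne (a₁ := 2) (a₂ := 0) (by decide))
  have hφe : b.coord 2 (b 1) = 0 := by
    rw [b.coord_apply, b.repr_self]
    exact Finsupp.single_eq_of_ne (hinj.ne (a₁ := 2) (a₂ := 1) (by decide))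
  obtain ⟨ψ, hψ⟩ := hlift_fst (b.coord 2) hφu hφe
  exact ⟨b 1, b 2, b.coord 2, ψ, hindep, hψ, hφe, by simp, hlift_fst, hlift_snd⟩

end StrictUpper

namespace IsMaxNilSubspace

variable {K E : Type*} [Field K] [AddCommGroup E] [Module K E] [FiniteDimensional K E]
  {V : Submodule K (End K E)} {n : ℕ}

theorem eq_strictUpper_of_le (hV : IsMaxNilSubspace V) {b : Basis (Fin n) K E}
    (hb : V ≤ strictUpper b) : V = strictUpper b :=
  Submodule.eq_of_le_of_finrank_le hb <| by
    rw [hV.finrank_eq]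
    exact (isNilSubspace_strictUpper b).finrank_le

theorem exists_finrank_evalRange_lt_of_inducedQuotient_eq (hV : IsMaxNilSubspace V) {u : E}
    (hu : u ≠ 0) {c : Basis (Fin n) K (E ⧸ K ∙ u)} (hVc : inducedQuotient V u = strictUpper c)
    (hVu : 2 ≤ finrank K (evalRange V u)) :
    ∃ x ≠ 0, finrank K (evalRange V x) < finrank K (evalRange V u) := by
  have hn : 2 ≤ n := by
    have hquot := finrank_quotient_span_singleton_add_one (K := K) hu
    have hdim := (spanEvalRange V u).finrank_le
    rw [hV.isNilSubspace.finrank_spanEvalRange hu, ← hquot, finrank_eq_card_basis c,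
      Fintype.card_fin] at hdim
    omega
  obtain ⟨m, rfl⟩ := Nat.exists_eq_add_of_le' hn
  obtain ⟨e, b, φ, ψ, hflag⟩ := exists_partialFlag hu hVc
  exact hflag.exists_finrank_evalRange_lt hV hVu

theorem exists_evalRange_eq_bot_of_inducedQuotient_eq [Nontrivial E] (hV : IsMaxNilSubspace V)
    (hc : ∀ u : E, u ≠ 0 → ∃ c : Basis (Fin n) K (E ⧸ K ∙ u),
      inducedQuotient V u = strictUpper c) : ∃ u ≠ 0, evalRange V u = ⊥ := by
  obtain ⟨u, hu, hmin⟩ := exists_minimalFor_of_wellFoundedLT (· ≠ (0 : E))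
    (fun x ↦ finrank K (evalRange V x)) (exists_ne 0)
  by_cases hVu : 2 ≤ finrank K (evalRange V u)
  · obtain ⟨c, hVc⟩ := hc u hu
    obtain ⟨x, hx, hlt⟩ := hV.exists_finrank_evalRange_lt_of_inducedQuotient_eq hu hVc hVu
    exact absurd (hmin hx hlt.le) hlt.not_ge
  · obtain hVu | hVu : finrank K (evalRange V u) = 0 ∨ finrank K (evalRange V u) = 1 := by omega
    · exact ⟨u, hu, Submodule.finrank_eq_zero.1 hVu⟩
    · exact hV.exists_evalRange_eq_bot hu hVu

theorem exists_eq_strictUpper (hV : IsMaxNilSubspace V) (hn : finrank K E = n) :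
    ∃ b : Basis (Fin n) K E, V = strictUpper b := by
  induction n generalizing E with
  | zero => exact ⟨finBasisOfFinrankEq K E hn, hV.eq_strictUpper_of_le fun M _ i ↦ i.elim0⟩
  | succ n ih =>
    have := nontrivial_of_finrank_eq_succ hn
    have hquot {u : E} (hu : u ≠ 0) :
        ∃ c : Basis (Fin n) K (E ⧸ K ∙ u), inducedQuotient V u = strictUpper c :=
      ih (hV.inducedQuotient hu) <| by
        rwa [← finrank_quotient_span_singleton_add_one hu, Nat.add_right_cancel_iff] at hn
    obtain ⟨u, hu, hVu⟩ := hV.exists_evalRange_eq_bot_of_inducedQuotient_eq fun u hu ↦ hquot hu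
    obtain ⟨c, hVc⟩ := hquot hu
    obtain ⟨b, hb, hbc⟩ := exists_basis_mkQ_succ_eq hu c
    exact ⟨b, hV.eq_strictUpper_of_le (le_strictUpper_of_inducedQuotient_eq hVu hVc hb hbc)⟩

end IsMaxNilSubspace

theorem toMatrix_mul_mul_toMatrix {R ι : Type*} [CommRing R] [Fintype ι] [DecidableEq ι]
    (b : Basis ι R (ι → R)) (M : Matrix ι ι R) :
    b.toMatrix (Pi.basisFun R ι) * M * (Pi.basisFun R ι).toMatrix b =
      LinearMap.toMatrix b b M.toLin' := by
  rw [← basis_toMatrix_mul_linearMap_toMatrix_mul_basis_toMatrix b (Pi.basisFun R ι) b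
    (Pi.basisFun R ι), ← LinearMap.toMatrix'_toLin' M]
  simp

/-- Gerstenhaber–Serezhkin equality case: a linear subspace of nilpotent `n × n`
matrices over a commutative field `K` of dimension `n choose 2` is similar to the
space of strictly upper-triangular matrices. -/
theorem stmt_3 (K : Type*) [Field K] (n : ℕ) (hn : 0 < n)
    (V : Submodule K (Matrix (Fin n) (Fin n) K))
    (hV : ∀ M ∈ V, IsNilpotent M)
    (hdim : Module.finrank K V = n.choose 2) :
    ∃ P : (Matrix (Fin n) (Fin n) K)ˣ,
      ∀ M : Matrix (Fin n) (Fin n) K,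
        M ∈ V ↔ ∀ i j : Fin n, j ≤ i →
          ((P : Matrix (Fin n) (Fin n) K) * M * ((P⁻¹ : (Matrix (Fin n) (Fin n) K)ˣ) :
            Matrix (Fin n) (Fin n) K)) i j = 0 := by
  let φ : Matrix (Fin n) (Fin n) K ≃ₗ[K] End K (Fin n → K) := Matrix.toLin'
  let e := Pi.basisFun K (Fin n)
  have hmax : IsMaxNilSubspace (V.map φ.toLinearMap) := by
    refine ⟨?_, by rw [LinearEquiv.finrank_map_eq, hdim, finrank_fin_fun]⟩
    rintro _ ⟨M, hM, rfl⟩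
    exact (hV M hM).map (Matrix.toLinAlgEquiv' (R := K) (n := Fin n))
  obtain ⟨b, hb⟩ := hmax.exists_eq_strictUpper (finrank_fin_fun K)
  refine ⟨⟨b.toMatrix e, e.toMatrix b, b.toMatrix_mul_toMatrix_flip e,
    e.toMatrix_mul_toMatrix_flip b⟩, fun M ↦ ?_⟩
  have hmem : M ∈ V ↔ φ M ∈ strictUpper b := by
    rw [← hb, Submodule.mem_map_equiv, φ.symm_apply_apply]
  rw [hmem, Units.inv_mk, toMatrix_mul_mul_toMatrix]
  simp only [LinearMap.toMatrix_apply]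
  rfl
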